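/- (Send fast-forward.) Let 𝒩 be one of the concrete network architectures p2p, senderbox (sb), or bag. If the finite word v · u₁ · (p▷q!a) · u₂ is 𝒩-channel-compliant and no event of u₁ has p as its active participant, then v · (p▷q!a) · u₁ · u₂ is 𝒩-channel-compliant. -/

import Mathlib

/-!
A send `p▷q!a` commutes to the left past every single event `e` in which `p` is not active: if
`e · p▷q!a` can be executed from a channel state, then so can `p▷q!a · e`, with the same resulting
state. Iterating this over `u₁` (`runFrom_send_forward`) gives the theorem.

Events on different channels always commute (`applyAt_swap`), so only events on the channel of
`p▷q!a` matter. If such an event is a receive, appending a message at the tail of a FIFO buffer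
that already has the right head, or adding one to a multiset, does not disturb the removal. If it
is a send, then in p2p and senderbox its sender is `p`, which is excluded, while in the bag
architecture insertions commute.
-/

/-- Asynchronous events: send events `p▷q!v` and receive events `p▷q?v`. -/
inductive Event (P V : Type) where
  | send (p q : P) (v : V)
  | recv (p q : P) (v : V)
deriving DecidableEq

/-- The active participant of an event: the sender of a send, the receiver of a receive. -/
def Event.active {P V : Type} : Event P V → P
  | .send p _ _ => p
  | .recv _ q _ => q

/-- A network architecture: channels `C`, buffer contents `B`, a channel map,
partial insert/remove operations, and an empty buffer. -/
structure NetArch (P V C B : Type) where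
  chan : P → P → C
  insert : P × P × V → B → Option B
  remove : P × P × V → B → Option B
  b0 : B

variable {P V C B : Type}

/-- Executing a single event on a channel state. -/
def NetArch.step [DecidableEq C] (N : NetArch P V C B) :
    Event P V → (C → B) → Option (C → B)
  | .send p q v, ξ => (N.insert (p, q, v) (ξ (N.chan p q))).map (Function.update ξ (N.chan p q))
  | .recv p q v, ξ => (N.remove (p, q, v) (ξ (N.chan p q))).map (Function.update ξ (N.chan p q))

/-- Executing a finite word of events from a channel state. -/
def NetArch.runFrom [DecidableEq C] (N : NetArch P V C B) :
    List (Event P V) → (C → B) → Option (C → B)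
  | [], ξ => some ξ
  | e :: w, ξ => (N.step e ξ).bind (N.runFrom w)

/-- The initial channel state: every channel holds the empty buffer. -/
def NetArch.init (N : NetArch P V C B) : C → B := fun _ => N.b0

/-- A finite word is channel-compliant if executing it from the initial channel
state is defined at every step. -/
def NetArch.compliant [DecidableEq C] (N : NetArch P V C B) (w : List (Event P V)) : Prop :=
  (N.runFrom w N.init).isSome

/-- A finite word is channel-matched if it is channel-compliant and reaches the
initial (all-empty) channel state. -/
def NetArch.matched [DecidableEq C] (N : NetArch P V C B) (w : List (Event P V)) : Prop :=
  N.runFrom w N.init = some N.init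

/-- Projection of a word onto the events in which participant `r` is active. -/
def proj [DecidableEq P] (r : P) (w : List (Event P V)) : List (Event P V) :=
  w.filter (fun e => decide (e.active = r))

/-- Equality under local projection. -/
def equivP [DecidableEq P] (w₁ w₂ : List (Event P V)) : Prop :=
  ∀ r : P, proj r w₁ = proj r w₂

/-- `split` replaces every synchronous message exchange `(p,q,v)` by the two
consecutive asynchronous events `p▷q!v · p▷q?v`. -/
def split : List (P × P × V) → List (Event P V)
  | [] => []
  | m :: ρ => Event.send m.1 m.2.1 m.2.2 :: Event.recv m.1 m.2.1 m.2.2 :: split ρ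

/-- FIFO insertion: append at the tail (always defined). -/
def fifoInsert {M : Type} (m : M) (b : List M) : Option (List M) := some (b ++ [m])

/-- FIFO removal: defined iff the buffer has head `m`, removing the head. -/
def fifoRemove {M : Type} [DecidableEq M] (m : M) : List M → Option (List M)
  | [] => none
  | m' :: b => if m' = m then some b else none

/-- Multiset insertion: add one occurrence (always defined). -/
def bagInsert {M : Type} (m : M) (b : Multiset M) : Option (Multiset M) := some (m ::ₘ b)

/-- Multiset removal: defined iff `m ∈ b`, deleting one occurrence. -/
def bagRemove {M : Type} [DecidableEq M] (m : M) (b : Multiset M) : Option (Multiset M) :=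
  if m ∈ b then some (b.erase m) else none

/-- Peer-to-peer FIFO architecture: one FIFO channel per sender-receiver pair. -/
def p2p (P V : Type) [DecidableEq P] [DecidableEq V] :
    NetArch P V (P × P) (List (P × P × V)) :=
  ⟨fun p q => (p, q), fifoInsert, fifoRemove, []⟩

/-- Senderbox FIFO architecture: one FIFO channel per sender. -/
def sb (P V : Type) [DecidableEq P] [DecidableEq V] :
    NetArch P V P (List (P × P × V)) :=
  ⟨fun p _ => p, fifoInsert, fifoRemove, []⟩

/-- Mailbox FIFO architecture: one FIFO channel per receiver. -/
def mb (P V : Type) [DecidableEq P] [DecidableEq V] :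
    NetArch P V P (List (P × P × V)) :=
  ⟨fun _ q => q, fifoInsert, fifoRemove, []⟩

/-- Monobox FIFO architecture: a single FIFO channel shared by all pairs. -/
def monob (P V : Type) [DecidableEq P] [DecidableEq V] :
    NetArch P V Unit (List (P × P × V)) :=
  ⟨fun _ _ => (), fifoInsert, fifoRemove, []⟩

/-- Bag architecture: a single channel holding a multiset of messages. -/
def bag (P V : Type) [DecidableEq P] [DecidableEq V] :
    NetArch P V Unit (Multiset (P × P × V)) :=
  ⟨fun _ _ => (), bagInsert, bagRemove, 0⟩

/-- Apply the partial buffer operation `f` to channel `c` of the channel state `ξ`. -/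
def applyAt [DecidableEq C] (c : C) (f : B → Option B) (ξ : C → B) : Option (C → B) :=
  (f (ξ c)).map (Function.update ξ c)

/-- The operation `g` can be moved ahead of `f`: whenever `f` followed by `g` is defined, so is
`g` followed by `f`, with the same result. -/
def Forwards {S : Type} (g f : S → Option S) : Prop :=
  ∀ b b₂, (f b).bind g = some b₂ → (g b).bind f = some b₂

lemma applyAt_swap [DecidableEq C] (c d : C) (f g : B → Option B)
    (h : c = d → Forwards g f) : Forwards (applyAt d g) (applyAt c f) := by
  intro ξ ξ₂ hξ
  by_cases hcd : c = d
  · subst hcd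
    have h' := h rfl (ξ c)
    simp only [applyAt, Option.bind_eq_some_iff, Option.map_eq_some_iff] at hξ h' ⊢
    obtain ⟨_, ⟨b₁, hb₁, rfl⟩, b₂, hb₂, rfl⟩ := hξ
    rw [Function.update_self] at hb₂
    obtain ⟨b', hb', hb₂'⟩ := h' b₂ ⟨b₁, hb₁, hb₂⟩
    exact ⟨_, ⟨b', hb', rfl⟩, b₂, by rwa [Function.update_self], by simp⟩
  · simp only [applyAt, Option.bind_eq_some_iff, Option.map_eq_some_iff] at hξ ⊢
    obtain ⟨_, ⟨b₁, hb₁, rfl⟩, b₂, hb₂, rfl⟩ := hξ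
    rw [Function.update_of_ne (Ne.symm hcd)] at hb₂
    exact ⟨_, ⟨b₂, hb₂, rfl⟩, b₁, by rwa [Function.update_of_ne hcd],
      Function.update_comm (Ne.symm hcd) _ _ _⟩

/-- The step-level commutation, reduced to commutation of buffer operations on one channel. -/
lemma step_send_forward [DecidableEq C] (N : NetArch P V C B) (p q : P) (a : V)
    (hsend : ∀ r s v, r ≠ p → N.chan r s = N.chan p q →
      Forwards (N.insert (p, q, a)) (N.insert (r, s, v)))
    (hrecv : ∀ m, Forwards (N.insert (p, q, a)) (N.remove m))
    (e : Event P V) (he : e.active ≠ p) :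
    Forwards (N.step (Event.send p q a)) (N.step e) := by
  cases e with
  | send r s v => exact applyAt_swap _ _ _ _ (hsend r s v he)
  | recv r s v => exact applyAt_swap _ _ _ _ fun _ => hrecv (r, s, v)

lemma runFrom_append [DecidableEq C] (N : NetArch P V C B) (u v : List (Event P V)) (ξ : C → B) :
    N.runFrom (u ++ v) ξ = (N.runFrom u ξ).bind (N.runFrom v) := by
  induction u generalizing ξ with
  | nil => rfl
  | cons e u ih =>
    simp only [List.cons_append, NetArch.runFrom, Option.bind_assoc]
    exact congrArg _ (funext ih)

lemma runFrom_send_forward [DecidableEq C] (N : NetArch P V C B) (s : Event P V)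
    (u₁ u₂ : List (Event P V)) (h : ∀ e ∈ u₁, Forwards (N.step s) (N.step e))
    (ξ η : C → B) (hη : N.runFrom (u₁ ++ s :: u₂) ξ = some η) :
    N.runFrom (s :: (u₁ ++ u₂)) ξ = some η := by
  induction u₁ generalizing ξ with
  | nil => exact hη
  | cons e u ih =>
    simp only [List.cons_append, NetArch.runFrom] at hη ⊢
    obtain ⟨ξ₁, h₁, hη⟩ := Option.bind_eq_some_iff.1 hη
    have hη' := ih (fun e he => h e (List.mem_cons_of_mem _ he)) ξ₁ hη
    obtain ⟨ξ₂, h₂, hη'⟩ := Option.bind_eq_some_iff.1 hη'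
    have hswap := h e List.mem_cons_self ξ ξ₂ (by rw [h₁]; exact h₂)
    rw [← Option.bind_assoc, hswap]
    exact hη'

lemma compliant_send_forward [DecidableEq C] (N : NetArch P V C B) (p q : P) (a : V)
    (hsend : ∀ r s v, r ≠ p → N.chan r s = N.chan p q →
      Forwards (N.insert (p, q, a)) (N.insert (r, s, v)))
    (hrecv : ∀ m, Forwards (N.insert (p, q, a)) (N.remove m))
    (w u₁ u₂ : List (Event P V)) (hu₁ : ∀ e ∈ u₁, e.active ≠ p)
    (hc : N.compliant (w ++ u₁ ++ Event.send p q a :: u₂)) :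
    N.compliant (w ++ Event.send p q a :: (u₁ ++ u₂)) := by
  obtain ⟨η, hη⟩ := Option.isSome_iff_exists.1 hc
  rw [List.append_assoc, runFrom_append] at hη
  obtain ⟨ξ, hξ, hη⟩ := Option.bind_eq_some_iff.1 hη
  refine Option.isSome_iff_exists.2 ⟨η, ?_⟩
  rw [runFrom_append, hξ]
  exact runFrom_send_forward N _ u₁ u₂
    (fun e he => step_send_forward N p q a hsend hrecv e (hu₁ e he)) ξ η hη

lemma fifo_insert_forwards_remove {M : Type} [DecidableEq M] (m₀ m : M) :
    Forwards (fifoInsert m₀) (fifoRemove m) := by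
  intro b b₂ h
  cases b with
  | nil => simp [fifoRemove] at h
  | cons x b =>
    by_cases hx : x = m
    · simpa [fifoRemove, fifoInsert, hx] using h
    · simp [fifoRemove, hx] at h

lemma bag_insert_forwards_insert {M : Type} (m₀ m : M) :
    Forwards (bagInsert m₀) (bagInsert m) := by
  intro b b₂ h
  simpa [bagInsert, Multiset.cons_swap m m₀] using h

lemma bag_insert_forwards_remove {M : Type} [DecidableEq M] (m₀ m : M) :
    Forwards (bagInsert m₀) (bagRemove m) := by
  intro b b₂ h
  by_cases hm : m ∈ b
  · simpa [bagInsert, bagRemove, hm, Multiset.erase_cons_tail_of_mem hm] using h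
  · simp [bagRemove, hm] at h

/-- Send fast-forward: for the p2p, senderbox and bag architectures, a send
event `p▷q!a` can be moved ahead of any block `u₁` containing no event in
which `p` is active, preserving channel compliance. -/
theorem send_fastforward {P V : Type} [DecidableEq P] [DecidableEq V]
    (w u₁ u₂ : List (Event P V)) (p q : P) (hpq : p ≠ q) (a : V)
    (hu₁ : ∀ e ∈ u₁, e.active ≠ p) :
    ((p2p P V).compliant (w ++ u₁ ++ Event.send p q a :: u₂) →
      (p2p P V).compliant (w ++ Event.send p q a :: (u₁ ++ u₂))) ∧
    ((sb P V).compliant (w ++ u₁ ++ Event.send p q a :: u₂) →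
      (sb P V).compliant (w ++ Event.send p q a :: (u₁ ++ u₂))) ∧
    ((bag P V).compliant (w ++ u₁ ++ Event.send p q a :: u₂) →
      (bag P V).compliant (w ++ Event.send p q a :: (u₁ ++ u₂))) := by
  refine ⟨compliant_send_forward (p2p P V) p q a ?_ ?_ w u₁ u₂ hu₁,
    compliant_send_forward (sb P V) p q a ?_ ?_ w u₁ u₂ hu₁,
    compliant_send_forward (bag P V) p q a ?_ ?_ w u₁ u₂ hu₁⟩
  · intro r s v hr h
    exact absurd (congrArg Prod.fst h) hr
  · exact fun m => fifo_insert_forwards_remove _ m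
  · intro r s v hr h
    exact absurd h hr
  · exact fun m => fifo_insert_forwards_remove _ m
  · exact fun r s v _ _ => bag_insert_forwards_insert _ _
  · exact fun m => bag_insert_forwards_remove _ m
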